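/- Let G be a finite group and p a prime. Suppose G ∈ R(p)* and let P be a Sylow p-subgroup of G. Then the center of P is contained in the center of G, i.e., Z(P) ≤ Z(G). -/

import Mathlib

/-- The index of an element `x` of a group `G`: the size of its conjugacy class,
`|x^G| = |G : C_G(x)|`. -/
noncomputable def classSize {G : Type*} [Group G] (x : G) : ℕ :=
  (Subgroup.centralizer {x}).index

/-- The `p`-index of `x`: the `p`-part of `|x^G|`. -/
noncomputable def pIndex (p : ℕ) {G : Type*} [Group G] (x : G) : ℕ :=
  p ^ ((classSize x).factorization p)

/-- `G` is `p`-index extremal (`G ∈ R(p)`): the set `N(G)_p` of `p`-indices of elements of `G`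
contains exactly one nontrivial element. -/
def IsPIndexExtremal (p : ℕ) (G : Type*) [Group G] : Prop :=
  ∃! a : ℕ, a ≠ 1 ∧ ∃ x : G, pIndex p x = a

/-- `x` is a `p`-element: its order is a power of `p`. -/
def IsPElement (p : ℕ) {G : Type*} [Group G] (x : G) : Prop :=
  ∃ k : ℕ, orderOf x = p ^ k

/-!
Let `Ω` be the union of the centers of the Sylow `p`-subgroups, on which `G` acts by conjugation.
By Sylow's theorem every orbit on `Ω` meets `Z(P)`, so there are at most `|Z(P)|` orbits.
Conversely every `g : G` fixes at least `|Z(P)|` points of `Ω`: let `T` be a Sylow `p`-subgroup of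
`C(g)`. If some `y ∈ T` is not in `Ω`, then its `p`-index is nontrivial, hence maximal, and this
forces `g` to centralize the whole center of some Sylow subgroup of `G`. Otherwise `T ⊆ Ω`, and
the existence of a `p`-element of maximal `p`-index gives `|Z(P)| ≤ |T|`. By Burnside's lemma the
number of orbits is the average number of fixed points, so both are always equal to `|Z(P)|`. The
identity fixes all of `Ω`, so there are as many orbits as points and `G` acts trivially on `Ω`.
-/

open Subgroup MulAction

theorem smul_eq_self_of_card_orbits_le_card_fixedBy {M α : Type*} [Group M] [MulAction M α]
    [Finite M] [Finite α]
    (h : ∀ m : M, Nat.card (orbitRel.Quotient M α) ≤ Nat.card (fixedBy α m)) (m : M) (a : α) :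
    m • a = a := by
  classical
  cases nonempty_fintype M
  cases nonempty_fintype α
  simp only [Nat.card_eq_fintype_card] at h
  have sum_eq : ∑ _m : M, Fintype.card (orbitRel.Quotient M α) =
      ∑ m : M, Fintype.card (fixedBy α m) := by
    rw [sum_card_fixedBy_eq_card_orbits_mul_card_group, Finset.sum_const, Finset.card_univ,
      smul_eq_mul, mul_comm]
  have card_eq : Fintype.card (orbitRel.Quotient M α) = Fintype.card (fixedBy α (1 : M)) :=
    (Finset.sum_eq_sum_iff_of_le fun m _ => h m).mp sum_eq 1 (Finset.mem_univ _)
  have card_le : Nat.card α ≤ Nat.card (orbitRel.Quotient M α) := by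
    rw [Nat.card_eq_fintype_card (α := orbitRel.Quotient M α), card_eq,
      ← Nat.card_eq_fintype_card, fixedBy_one_eq_univ, Nat.card_univ]
  have mk_bijective : Function.Bijective (Quotient.mk'' : α → orbitRel.Quotient M α) :=
    Quotient.mk''_surjective.bijective_of_nat_card_le card_le
  exact mk_bijective.injective (Quotient.sound' (orbitRel_apply.mpr (mem_orbit a m)))

section PElement

variable {G : Type*} [Group G] {p : ℕ}

theorem mem_zpowers_mul_of_coprime {y b : G} (h : Commute y b)
    (hco : (orderOf b).Coprime (orderOf y)) : y ∈ zpowers (y * b) := by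
  obtain ⟨m, hm⟩ := exists_pow_eq_self_of_coprime hco
  refine ⟨(orderOf b * m : ℕ), ?_⟩
  simp only [zpow_natCast, pow_mul, h.mul_pow, pow_orderOf_eq_one, mul_one, one_pow, hm]

theorem centralizer_singleton_le_of_mem_zpowers {x y : G} (h : y ∈ zpowers x) :
    centralizer {x} ≤ centralizer {y} := by
  rw [← centralizer_closure {x}, ← zpowers_eq_closure]
  exact centralizer_le (Set.singleton_subset_iff.mpr h)

theorem centralizer_mul_eq_inf_of_coprime {y b : G} (h : Commute y b)
    (hco : (orderOf b).Coprime (orderOf y)) :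
    centralizer {y * b} = centralizer {y} ⊓ centralizer {b} := by
  refine le_antisymm (le_inf ?_ ?_) fun c hc => ?_
  · exact centralizer_singleton_le_of_mem_zpowers (mem_zpowers_mul_of_coprime h hco)
  · rw [h.eq]
    exact centralizer_singleton_le_of_mem_zpowers (mem_zpowers_mul_of_coprime h.symm hco.symm)
  · simp only [mem_inf, mem_centralizer_singleton_iff] at hc ⊢
    exact Commute.mul_right hc.1 hc.2

theorem exists_eq_mul_pow_eq_one_of_coprime {g : G} {m n : ℕ} (hg : g ^ (m * n) = 1)
    (hmn : m.Coprime n) :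
    ∃ a ∈ zpowers g, ∃ b ∈ zpowers g, g = a * b ∧ a ^ m = 1 ∧ b ^ n = 1 := by
  obtain ⟨u, v, huv⟩ : IsCoprime (m : ℤ) n := Nat.isCoprime_iff_coprime.mpr hmn
  refine ⟨g ^ (v * n), zpow_mem_zpowers g _, g ^ (u * m), zpow_mem_zpowers g _, ?_, ?_, ?_⟩
  · rw [← zpow_add, add_comm, huv, zpow_one]
  · rw [← zpow_natCast, ← zpow_mul, mul_assoc, mul_comm, zpow_mul, mul_comm (n : ℤ),
      ← Nat.cast_mul, zpow_natCast, hg, one_zpow]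
  · rw [← zpow_natCast, ← zpow_mul, mul_assoc, mul_comm, zpow_mul, ← Nat.cast_mul, zpow_natCast,
      hg, one_zpow]

theorem exists_eq_mul_isPElement_coprime [Finite G] (hp : p.Prime) (g : G) :
    ∃ a ∈ zpowers g, ∃ b ∈ zpowers g, g = a * b ∧ IsPElement p a ∧ p.Coprime (orderOf b) := by
  have hp_compl : p.Coprime (ordCompl[p] (orderOf g)) :=
    Nat.coprime_ordCompl hp (orderOf_pos g).ne'
  have hg : g ^ (ordProj[p] (orderOf g) * ordCompl[p] (orderOf g)) = 1 := by
    rw [Nat.ordProj_mul_ordCompl_eq_self, pow_orderOf_eq_one]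
  obtain ⟨a, ha, b, hb, hab, ha_pow, hb_pow⟩ :=
    exists_eq_mul_pow_eq_one_of_coprime hg (hp_compl.pow_left _)
  obtain ⟨k, -, hk⟩ := (Nat.dvd_prime_pow hp).mp (orderOf_dvd_of_pow_eq_one ha_pow)
  exact ⟨a, ha, b, hb, hab, ⟨k, hk⟩,
    hp_compl.coprime_dvd_right (orderOf_dvd_of_pow_eq_one hb_pow)⟩

theorem IsPElement.isPGroup_zpowers {x : G} (hx : IsPElement p x) : IsPGroup p (zpowers x) :=
  let ⟨_, hk⟩ := hx
  IsPGroup.of_card ((Nat.card_zpowers x).trans hk)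

theorem isPElement_of_mem [Fact p.Prime] {U : Subgroup G} (hU : IsPGroup p U) {x : G}
    (hx : x ∈ U) : IsPElement p x := by
  obtain ⟨k, hk⟩ := IsPGroup.iff_orderOf.mp hU ⟨x, hx⟩
  exact ⟨k, (orderOf_mk x hx).symm.trans hk⟩

end PElement

section SylowIn

variable {G : Type*} [Group G] {p : ℕ} {U V K : Subgroup G}

/-- `U` is a Sylow `p`-subgroup of the subgroup `K`. Both are subgroups of the same ambient group,
and the condition is on orders, so that `U` can be recognized as a Sylow subgroup of several
`K` at once. -/
def IsSylowIn (p : ℕ) (U K : Subgroup G) : Prop :=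
  U ≤ K ∧ Nat.card U = p ^ (Nat.card K).factorization p

theorem IsSylowIn.isPGroup (hU : IsSylowIn p U K) : IsPGroup p U :=
  IsPGroup.of_card hU.2

variable [Finite G] [Fact p.Prime]

theorem exists_isSylowIn_ge (hV : IsPGroup p V) (hVK : V ≤ K) : ∃ U, V ≤ U ∧ IsSylowIn p U K := by
  obtain ⟨Q, hQ⟩ := (hV.comap_subtype (K := K)).exists_le_sylow
  refine ⟨(Q : Subgroup K).map K.subtype, ?_, map_subtype_le _, ?_⟩
  · rw [← map_subgroupOf_eq_of_le hVK]
    exact map_mono hQ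
  · rw [card_map_of_injective K.subtype_injective]
    exact Q.card_eq_multiplicity

variable (p) in
theorem exists_isSylowIn (K : Subgroup G) : ∃ U, IsSylowIn p U K :=
  let ⟨U, _, hU⟩ := exists_isSylowIn_ge (p := p) IsPGroup.of_bot (bot_le : ⊥ ≤ K)
  ⟨U, hU⟩

theorem exists_isSylowIn_of_mem {x : G} (hx : IsPElement p x) (hxK : x ∈ K) :
    ∃ U, x ∈ U ∧ IsSylowIn p U K := by
  simpa only [zpowers_le] using exists_isSylowIn_ge hx.isPGroup_zpowers (zpowers_le.mpr hxK)

theorem IsSylowIn.card_le (hU : IsSylowIn p U K) (hV : IsPGroup p V) (hVK : V ≤ K) :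
    Nat.card V ≤ Nat.card U := by
  obtain ⟨W, hVW, hW⟩ := exists_isSylowIn_ge hV hVK
  exact (card_le_of_le hVW).trans_eq (hW.2.trans hU.2.symm)

theorem IsSylowIn.mem_of_mem_centralizer (hU : IsSylowIn p U K) {x : G} (hx : IsPElement p x)
    (hxK : x ∈ K) (hxU : x ∈ centralizer (U : Set G)) : x ∈ U := by
  have le_normalizer : zpowers x ≤ normalizer (U : Set G) :=
    zpowers_le.mpr (centralizer_le_normalizer _ hxU)
  have isPGroup_sup : IsPGroup p (U ⊔ zpowers x : Subgroup G) :=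
    hU.isPGroup.to_sup_of_normal_left' hx.isPGroup_zpowers le_normalizer
  have eq_sup : U = U ⊔ zpowers x :=
    eq_of_le_of_card_ge le_sup_left
      (hU.card_le isPGroup_sup (sup_le hU.1 (zpowers_le.mpr hxK)))
  rw [eq_sup]
  exact le_sup_right (a := U) (mem_zpowers x)

theorem IsSylowIn.self_mem_of_isPElement {y : G}
    (hU : IsSylowIn p U (centralizer {y})) (hy : IsPElement p y) : y ∈ U := by
  refine hU.mem_of_mem_centralizer hy (mem_centralizer_singleton_iff.mpr rfl) ?_
  exact mem_centralizer_iff.mpr fun u hu => mem_centralizer_singleton_iff.mp (hU.1 hu)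

end SylowIn

section PIndex

variable {G : Type*} [Group G] {p : ℕ} {U V : Subgroup G} {x g : G}

theorem pIndex_pos (hp : p.Prime) (x : G) : 0 < pIndex p x :=
  Nat.pow_pos hp.pos

theorem IsPIndexExtremal.pIndex_le (hp : p.Prime) (hG : IsPIndexExtremal p G)
    (hx : pIndex p x ≠ 1) (g : G) : pIndex p g ≤ pIndex p x := by
  by_cases hg : pIndex p g = 1
  · exact hg.trans_le (pIndex_pos hp x)
  · exact (hG.unique ⟨hg, g, rfl⟩ ⟨hx, x, rfl⟩).le

variable [Finite G]

theorem IsSylowIn.card_mul_pIndex (hU : IsSylowIn p U (centralizer {x})) :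
    Nat.card U * pIndex p x = p ^ (Nat.card G).factorization p := by
  rw [hU.2, pIndex, classSize, ← pow_add, ← (centralizer {x}).card_mul_index,
    Nat.factorization_mul Nat.card_pos.ne' index_ne_zero_of_finite, Finsupp.add_apply]

theorem IsSylowIn.card_le_card_of_pIndex_le (hp : p.Prime) (hU : IsSylowIn p U (centralizer {x}))
    (hV : IsSylowIn p V (centralizer {g})) (h : pIndex p g ≤ pIndex p x) :
    Nat.card U ≤ Nat.card V := by
  refine Nat.le_of_mul_le_mul_right (c := pIndex p x) ?_ (pIndex_pos hp x)
  calc Nat.card U * pIndex p x = Nat.card V * pIndex p g :=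
        hU.card_mul_pIndex.trans hV.card_mul_pIndex.symm
    _ ≤ Nat.card V * pIndex p x := Nat.mul_le_mul_left _ h

theorem IsSylowIn.of_centralizer_le_of_pIndex_le [Fact p.Prime]
    (hU : IsSylowIn p U (centralizer {x})) (hle : centralizer {x} ≤ centralizer {g})
    (h : pIndex p x ≤ pIndex p g) : IsSylowIn p U (centralizer {g}) := by
  obtain ⟨V, hV⟩ := exists_isSylowIn p (centralizer {g})
  have hUg : U ≤ centralizer {g} := hU.1.trans hle
  refine ⟨hUg, Eq.trans (le_antisymm ?_ ?_) hV.2⟩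
  · exact hV.card_le hU.isPGroup hUg
  · exact hV.card_le_card_of_pIndex_le Fact.out hU h

end PIndex

section AmbientCenter

variable {G : Type*} [Group G] {p : ℕ}

/-- The center `Z(H)` of a subgroup `H`, as a subgroup of the ambient group. -/
abbrev ambientCenter (H : Subgroup G) : Subgroup G :=
  (center H).map H.subtype

theorem mem_ambientCenter_iff {H : Subgroup G} {z : G} :
    z ∈ ambientCenter H ↔ z ∈ H ∧ z ∈ centralizer (H : Set G) := by
  constructor
  · rintro ⟨w, hw, rfl⟩
    exact ⟨w.2, fun h hh => congrArg Subtype.val (mem_center_iff.mp hw ⟨h, hh⟩)⟩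
  · rintro ⟨hzH, hz⟩
    exact ⟨⟨z, hzH⟩, mem_center_iff.mpr fun h => Subtype.ext (hz h h.2), rfl⟩

theorem map_mem_ambientCenter_map {G' : Type*} [Group G'] (f : G →* G') {H : Subgroup G} {z : G}
    (hz : z ∈ ambientCenter H) : f z ∈ ambientCenter (H.map f) := by
  rw [mem_ambientCenter_iff] at hz ⊢
  exact ⟨mem_map_of_mem f hz.1, map_centralizer_le_centralizer_image _ f (mem_map_of_mem f hz.2)⟩

theorem isPElement_of_mem_ambientCenter [Fact p.Prime] {R : Sylow p G} {z : G}
    (hz : z ∈ ambientCenter (R : Subgroup G)) : IsPElement p z :=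
  isPElement_of_mem R.isPGroup' (map_subtype_le _ hz)

variable [Finite G] [Fact p.Prime]

theorem card_ambientCenter_sylow (P R : Sylow p G) :
    Nat.card (ambientCenter (P : Subgroup G)) = Nat.card (ambientCenter (R : Subgroup G)) := by
  rw [card_map_of_injective (subtype_injective _), card_map_of_injective (subtype_injective _)]
  exact Nat.card_congr (centerCongr (P.equiv R)).toEquiv

theorem IsSylowIn.ambientCenter_le {y : G} {U : Subgroup G}
    (hU : IsSylowIn p U (centralizer {y})) (hy : IsPElement p y) {R : Sylow p G} (hUR : U ≤ R) :
    ambientCenter (R : Subgroup G) ≤ U := by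
  intro z hz
  have hzR := (mem_ambientCenter_iff.mp hz).2
  refine hU.mem_of_mem_centralizer (isPElement_of_mem_ambientCenter hz) ?_
    (centralizer_le hUR hzR)
  exact centralizer_le (Set.singleton_subset_iff.mpr (hUR (hU.self_mem_of_isPElement hy))) hzR

theorem exists_ambientCenter_sylow_le_centralizer {y g : G} (hy : IsPElement p y)
    (hyg : Commute y g) (hmax : ∀ x : G, pIndex p x ≤ pIndex p y) :
    ∃ R : Sylow p G, ambientCenter (R : Subgroup G) ≤ centralizer {g} := by
  obtain ⟨a, ha, b, hb, hg, hap, hbp⟩ := exists_eq_mul_isPElement_coprime (Fact.out : p.Prime) g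
  have commute_of_mem {c : G} (hc : c ∈ zpowers g) : Commute y c :=
    mem_centralizer_singleton_iff.mp
      (centralizer_singleton_le_of_mem_zpowers hc (mem_centralizer_singleton_iff.mpr hyg))
  have hab : Commute a b := setLike_mul_comm ha hb
  have hco : (orderOf b).Coprime (orderOf y) := by
    obtain ⟨k, hk⟩ := hy
    exact hk ▸ (hbp.pow_left k).symm
  have centralizer_mul : centralizer {y * b} = centralizer {y} ⊓ centralizer {b} :=
    centralizer_mul_eq_inf_of_coprime (commute_of_mem hb) hco
  have ha_mem : a ∈ centralizer {y * b} := by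
    rw [mem_centralizer_singleton_iff]
    exact (commute_of_mem ha).symm.mul_right hab
  obtain ⟨U, haU, hU⟩ := exists_isSylowIn_of_mem hap ha_mem
  -- Maximality of the `p`-index of `y` lets `U` serve for `C(y)` too, whence `Z(R) ≤ U ≤ C(b)`.
  have hUy : IsSylowIn p U (centralizer {y}) :=
    hU.of_centralizer_le_of_pIndex_le (centralizer_mul.trans_le inf_le_left) (hmax _)
  obtain ⟨R, hUR⟩ := hU.isPGroup.exists_le_sylow
  refine ⟨R, fun z hz => mem_centralizer_singleton_iff.mpr ?_⟩
  have hza : Commute z a := ((mem_ambientCenter_iff.mp hz).2 a (hUR haU)).symm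
  have hzb : Commute z b := mem_centralizer_singleton_iff.mp
    (centralizer_mul.trans_le inf_le_right (hU.1 (hUy.ambientCenter_le hy hUR hz)))
  rw [hg]
  exact hza.mul_right hzb

end AmbientCenter

section SylowCenters

variable {G : Type*} [Group G] {p : ℕ}

/-- The union of the centers of the Sylow `p`-subgroups of `G`, as a `G`-set under conjugation. -/
def sylowCenters (p : ℕ) (G : Type*) [Group G] : SubMulAction (ConjAct G) G where
  carrier := {z | ∃ R : Sylow p G, z ∈ ambientCenter (R : Subgroup G)}
  smul_mem' c z := by
    rintro ⟨R, hz⟩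
    exact ⟨ConjAct.ofConjAct c • R, map_mem_ambientCenter_map (MulAut.conj _).toMonoidHom hz⟩

theorem ambientCenter_subset_sylowCenters (R : Sylow p G) :
    (ambientCenter (R : Subgroup G) : Set G) ⊆ sylowCenters p G :=
  fun _ hz => ⟨R, hz⟩

variable [Finite G]

theorem card_le_card_fixedBy_sylowCenters {A : Subgroup G} {c : ConjAct G}
    (hA : (A : Set G) ⊆ sylowCenters p G) (hAc : A ≤ centralizer {ConjAct.ofConjAct c}) :
    Nat.card A ≤ Nat.card (fixedBy (sylowCenters p G) c) := by
  have mem_fixedBy_of_mem : ∀ w : A, (⟨w, hA w.2⟩ : sylowCenters p G) ∈ fixedBy _ c := fun w =>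
    Subtype.ext (mul_inv_eq_of_eq_mul (mem_centralizer_singleton_iff.mp (hAc w.2)).symm)
  exact Nat.card_le_card_of_injective (fun w => ⟨_, mem_fixedBy_of_mem w⟩) fun w w' h =>
    Subtype.ext (congrArg (fun z => (z.1 : G)) h)

variable [Fact p.Prime]

theorem card_orbits_sylowCenters_le (P : Sylow p G) :
    Nat.card (orbitRel.Quotient (ConjAct G) (sylowCenters p G)) ≤
      Nat.card (ambientCenter (P : Subgroup G)) := by
  refine Nat.card_le_card_of_surjective
    (fun z : ambientCenter (P : Subgroup G) =>
      Quotient.mk'' ⟨z, ambientCenter_subset_sylowCenters P z.2⟩) fun q => ?_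
  induction q using Quotient.inductionOn' with | h w
  obtain ⟨w, R, hw⟩ := w
  obtain ⟨g, rfl⟩ := exists_smul_eq G R P
  exact ⟨⟨_, map_mem_ambientCenter_map (MulAut.conj g).toMonoidHom hw⟩,
    Quotient.sound' (orbitRel_apply.mpr ⟨ConjAct.toConjAct g, rfl⟩)⟩

theorem mem_sylowCenters_of_pIndex_eq_one {x : G} (hx : IsPElement p x) (h : pIndex p x = 1) :
    x ∈ sylowCenters p G := by
  obtain ⟨U, hU⟩ := exists_isSylowIn p (centralizer {x})
  have card_eq := hU.card_mul_pIndex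
  rw [h, mul_one] at card_eq
  refine ⟨Sylow.ofCard U card_eq, mem_ambientCenter_iff.mpr ⟨hU.self_mem_of_isPElement hx, ?_⟩⟩
  exact mem_centralizer_iff.mpr fun u hu => mem_centralizer_singleton_iff.mp (hU.1 hu)

theorem card_ambientCenter_sylow_le_of_isSylowIn {x g : G} (hx : IsPElement p x)
    (hmax : ∀ y : G, pIndex p y ≤ pIndex p x) {T : Subgroup G}
    (hT : IsSylowIn p T (centralizer {g})) (P : Sylow p G) :
    Nat.card (ambientCenter (P : Subgroup G)) ≤ Nat.card T := by
  obtain ⟨U, hU⟩ := exists_isSylowIn p (centralizer {x})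
  obtain ⟨R, hUR⟩ := hU.isPGroup.exists_le_sylow
  calc Nat.card (ambientCenter (P : Subgroup G))
      = Nat.card (ambientCenter (R : Subgroup G)) := card_ambientCenter_sylow P R
    _ ≤ Nat.card U := card_le_of_le (hU.ambientCenter_le hx hUR)
    _ ≤ Nat.card T := hU.card_le_card_of_pIndex_le Fact.out hT (hmax g)

theorem card_ambientCenter_le_card_fixedBy
    (hmax : ∀ y : G, IsPElement p y → pIndex p y ≠ 1 → ∀ g : G, pIndex p g ≤ pIndex p y)
    (hstar : ∃ x : G, IsPElement p x ∧ pIndex p x ≠ 1) (P : Sylow p G) (c : ConjAct G) :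
    Nat.card (ambientCenter (P : Subgroup G)) ≤ Nat.card (fixedBy (sylowCenters p G) c) := by
  obtain ⟨T, hT⟩ := exists_isSylowIn p (centralizer {ConjAct.ofConjAct c})
  by_cases hTΩ : (T : Set G) ⊆ sylowCenters p G
  · obtain ⟨x, hx, hx_ne⟩ := hstar
    exact (card_ambientCenter_sylow_le_of_isSylowIn hx (hmax x hx hx_ne) hT P).trans
      (card_le_card_fixedBy_sylowCenters hTΩ hT.1)
  · obtain ⟨y, hyT, hyΩ⟩ := Set.not_subset.mp hTΩ
    have hy : IsPElement p y := isPElement_of_mem hT.isPGroup hyT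
    have hy_ne : pIndex p y ≠ 1 := fun h => hyΩ (mem_sylowCenters_of_pIndex_eq_one hy h)
    obtain ⟨R, hR⟩ := exists_ambientCenter_sylow_le_centralizer hy
      (mem_centralizer_singleton_iff.mp (hT.1 hyT)) (hmax y hy hy_ne)
    exact (card_ambientCenter_sylow P R).trans_le
      (card_le_card_fixedBy_sylowCenters (ambientCenter_subset_sylowCenters R) hR)

end SylowCenters

theorem rp_star_center_sylow_le_center_general {G : Type*} [Group G] [Finite G] (p : ℕ)
    (hp : p.Prime)
    (hmax : ∀ y : G, IsPElement p y → pIndex p y ≠ 1 → ∀ g : G, pIndex p g ≤ pIndex p y)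
    (hstar : ∃ x : G, IsPElement p x ∧ pIndex p x ≠ 1) (P : Sylow p G) :
    (Subgroup.center (P : Subgroup G)).map (P : Subgroup G).subtype ≤ Subgroup.center G := by
  have : Fact p.Prime := ⟨hp⟩
  have : Finite (ConjAct G) := ‹Finite G›
  have conj_eq_self : ∀ (c : ConjAct G) (z : sylowCenters p G), c • z = z :=
    smul_eq_self_of_card_orbits_le_card_fixedBy fun c =>
      (card_orbits_sylowCenters_le P).trans (card_ambientCenter_le_card_fixedBy hmax hstar P c)
  refine fun z hz => mem_center_iff.mpr fun g => ?_
  exact mul_inv_eq_iff_eq_mul.mp (congrArg Subtype.val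
    (conj_eq_self (ConjAct.toConjAct g) ⟨z, ambientCenter_subset_sylowCenters P hz⟩))

theorem rp_star_center_sylow_le_center {G : Type*} [Group G] [Finite G] (p : ℕ)
    (hp : p.Prime) (hR : IsPIndexExtremal p G)
    (hstar : ∃ x : G, IsPElement p x ∧ pIndex p x ≠ 1) (P : Sylow p G) :
    (Subgroup.center (P : Subgroup G)).map (P : Subgroup G).subtype ≤ Subgroup.center G := by
  exact rp_star_center_sylow_le_center_general p hp (fun _ _ => hR.pIndex_le hp) hstar P
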